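/- Let σ > 0, let 1 ≤ v ≤ m, let B ⊆ ℒ^{mn} be a ball of radius ρ₀ < 1 with ‖A‖_∞ ≤ σ for all A ∈ B, let μ_{v-1} > 0, and let B'' ⊆ B be a ball such that ‖M_{v-1}(A)‖_∞ > ρ₀ μ_{v-1} M_{v-2}(B'') for every A ∈ B''. Let B' ⊆ B'' be a ball of radius ρ(B') < (1/2) μ_{v-1} ρ(B''), and let A' ∈ B' satisfy ‖M_v(A')‖_∞ < (1/8) M_{v-1}(B'). Assume moreover that the maximum ‖M_{v-1}(A')‖_∞ is attained at the coordinate d_v = det(y_h·C_l(Ā'^*))_{1≤h,l≤v-1}. Then there is a constant K₅(σ) > 0, depending only on m, n and σ, such that ‖∇D_v(A')‖_∞ > K₅(σ) M_{v-1}(B'). -/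

import Mathlib

/-!
Common setup: the field `ℒ = 𝔽((X⁻¹))` of formal Laurent series with coefficients
in a finite field `𝔽` of `k` elements.  We realize `ℒ` as `LaurentSeries 𝔽`
(Hahn series over `ℤ`) in the variable `T = X⁻¹`, so that `X` corresponds to `T⁻¹`
and the polynomial ring `𝔽[X]` corresponds to series supported on nonpositive
exponents.  The absolute value of `x = Σ_{i ≤ N} a_i X^i` (with `a_N ≠ 0`) is
`k^N`, i.e. `k^(-order x)` in terms of the `T`-adic order.
-/

open scoped Classical ENNReal NNReal
open MeasureTheory

noncomputable section

namespace FSBad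

/-- The field `ℒ = 𝔽((X⁻¹))`. -/
abbrev L (𝔽 : Type) [Field 𝔽] : Type := LaurentSeries 𝔽

variable {𝔽 : Type} [Field 𝔽] [Fintype 𝔽]

/-- The absolute value `‖·‖` on `ℒ`: `‖x‖ = k^(deg_X x)`, `‖0‖ = 0`. -/
def lnorm (x : L 𝔽) : ℝ := if x = 0 then 0 else (Fintype.card 𝔽 : ℝ) ^ (-x.order)

/-- Membership in the polynomial ring `𝔽[X] ⊆ ℒ` (polynomials in `X = T⁻¹`). -/
def IsPoly (x : L 𝔽) : Prop := ∀ i : ℤ, 0 < i → x.coeff i = 0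

/-- The height (sup-norm) `‖·‖_∞` on `ℒ^ι`. -/
def vnorm {ι : Type*} (x : ι → L 𝔽) : ℝ := ⨆ i, lnorm (x i)

/-- The closed ball in `ℒ^ι` with centre `c` and radius `ρ`. -/
def vball {ι : Type*} (c : ι → L 𝔽) (ρ : ℝ) : Set (ι → L 𝔽) :=
  {x | vnorm (fun i => x i - c i) ≤ ρ}

/-- `m × n` matrices over `ℒ`, identified with `ℒ^(mn)`. -/
abbrev Mat (𝔽 : Type) [Field 𝔽] (m n : ℕ) : Type := Matrix (Fin m) (Fin n) (L 𝔽)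

/-- The height of a matrix, i.e. the sup-norm on `ℒ^(mn)`. -/
def mnorm {m n : ℕ} (A : Mat 𝔽 m n) : ℝ := ⨆ p : Fin m × Fin n, lnorm (A p.1 p.2)

/-- The closed ball in `ℒ^(mn)` with centre `c` and radius `ρ`. -/
def mball {m n : ℕ} (c : Mat 𝔽 m n) (ρ : ℝ) : Set (Mat 𝔽 m n) :=
  {A | mnorm (A - c) ≤ ρ}

/-- The distance `⟨x⟩` from `x ∈ ℒ^h` to the polynomial lattice `𝔽[X]^h`. -/
def latDist {h : ℕ} (x : Fin h → L 𝔽) : ℝ :=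
  sInf {r : ℝ | ∃ p : Fin h → L 𝔽, (∀ i, IsPoly (p i)) ∧ r = vnorm (fun i => x i - p i)}

/-- The set `𝔅(m,n)` of badly approximable systems of `m` linear forms in `n`
variables over `ℒ`. -/
def Bad (𝔽 : Type) [Field 𝔽] [Fintype 𝔽] (m n : ℕ) : Set (Mat 𝔽 m n) :=
  {A | ∃ K : ℝ, 0 < K ∧ ∀ q : Fin m → L 𝔽, (∀ i, IsPoly (q i)) → q ≠ 0 →
    latDist (Matrix.vecMul q A) ^ n > K / vnorm q ^ m}

/-- The Hausdorff `s`-measure of `E ⊆ ℒ^(mn)`, defined through countable covers by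
balls of radii `< δ`, letting `δ → 0` (the infimum over `δ`-covers is nonincreasing
in `δ`, so the limit is the supremum over `δ > 0`). -/
def hMeasure {m n : ℕ} (s : ℝ) (E : Set (Mat 𝔽 m n)) : ℝ≥0∞ :=
  ⨆ (δ : ℝ) (_ : 0 < δ),
    ⨅ (c : ℕ → Mat 𝔽 m n) (ρ : ℕ → ℝ) (_ : ∀ i, 0 < ρ i ∧ ρ i < δ)
      (_ : E ⊆ ⋃ i, mball (c i) (ρ i)), ∑' i, ENNReal.ofReal (ρ i ^ s)

/-- The Hausdorff dimension of `E ⊆ ℒ^(mn)`. -/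
def hdim {m n : ℕ} (E : Set (Mat 𝔽 m n)) : ℝ :=
  sInf {s : ℝ | 0 ≤ s ∧ hMeasure s E = 0}

/-! ### Schmidt `(α,β)`-games on `ℒ^(mn)` -/

/-- A formal ball: an element of `Ω = ℒ^(mn) × ℝ`. -/
structure FBall (𝔽 : Type) [Field 𝔽] (m n : ℕ) where
  /-- centre -/
  c : Mat 𝔽 m n
  /-- radius -/
  r : ℝ

/-- Formal inclusion of formal balls: `(c₁,ρ₁) ⊆ (c₂,ρ₂)` iff `ρ₁ + ‖c₁ - c₂‖_∞ ≤ ρ₂`. -/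
def FBall.ssub {m n : ℕ} (B₁ B₂ : FBall 𝔽 m n) : Prop :=
  B₁.r + mnorm (B₁.c - B₂.c) ≤ B₂.r

/-- The subset of `ℒ^(mn)` determined by a formal ball. -/
def FBall.toSet {m n : ℕ} (B : FBall 𝔽 m n) : Set (Mat 𝔽 m n) := mball B.c B.r

/-- A strategy for White: given the balls `B₁, …, B_{i+1}` chosen by Black so far,
produce White's next ball. -/
abbrev Strategy (𝔽 : Type) [Field 𝔽] (m n : ℕ) : Type :=
  (i : ℕ) → (Fin (i + 1) → FBall 𝔽 m n) → FBall 𝔽 m n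

/-- White's move at stage `i` when following strategy `str` against Black's balls `B`. -/
def wMove {m n : ℕ} (str : Strategy 𝔽 m n) (B : ℕ → FBall 𝔽 m n) (i : ℕ) : FBall 𝔽 m n :=
  str i fun j => B j.1

/-- Black's move `B_{j+2}` is legal (for parameter `β`): it is a formal subset of
White's ball `W_{j+1}` and has radius `β · ρ(W_{j+1})`. -/
def BlackOk {m n : ℕ} (β : ℝ) (str : Strategy 𝔽 m n) (B : ℕ → FBall 𝔽 m n) (j : ℕ) : Prop :=
  (B (j + 1)).ssub (wMove str B j) ∧ (B (j + 1)).r = β * (wMove str B j).r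

/-- White's move `W_{i+1}` is legal (for parameter `α`): it is a formal subset of
Black's ball `B_{i+1}` and has radius `α · ρ(B_{i+1})`. -/
def WhiteOk {m n : ℕ} (α : ℝ) (str : Strategy 𝔽 m n) (B : ℕ → FBall 𝔽 m n) (i : ℕ) : Prop :=
  (wMove str B i).ssub (B i) ∧ (wMove str B i).r = α * (B i).r

/-- `str` is a winning strategy for White in the `(α,β;S)`-game: against any
sequence of Black balls, White's moves are legal as long as Black has played
legally so far, and if the whole play is legal then the intersection of the
chosen balls is contained in `S`. -/
def WinningStrategy {m n : ℕ} (α β : ℝ) (S : Set (Mat 𝔽 m n)) (str : Strategy 𝔽 m n) : Prop :=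
  ∀ B : ℕ → FBall 𝔽 m n, 0 ≤ (B 0).r →
    (∀ i, (∀ j < i, BlackOk β str B j) → WhiteOk α str B i) ∧
    ((∀ j, BlackOk β str B j) → (⋂ i, (B i).toSet) ⊆ S)

/-- `S` is `(α,β)`-winning. -/
def IsWinningAB {m n : ℕ} (α β : ℝ) (S : Set (Mat 𝔽 m n)) : Prop :=
  ∃ str : Strategy 𝔽 m n, WinningStrategy α β S str

/-- `S` is `α`-winning. -/
def IsWinningA {m n : ℕ} (α : ℝ) (S : Set (Mat 𝔽 m n)) : Prop :=
  ∀ β : ℝ, 0 < β → β < 1 → IsWinningAB α β S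

/-- The winning dimension of `S` (a supremum of a set of reals, which is `0` by
convention when the set is empty). -/
def windim {m n : ℕ} (S : Set (Mat 𝔽 m n)) : ℝ :=
  sSup {α : ℝ | 0 < α ∧ α < 1 ∧ IsWinningA α S}

/-! ### The matrices `Ā`, `Ā^*` and the quantities `M_v`, `D_v`, `∇D_v` -/

/-- `Ā = [[A, I_m], [I_n, 0]]`. Rows are indexed by `Fin m ⊕ Fin n`
(coordinates `q_1, …, q_{m+n}`), columns by `Fin n ⊕ Fin m`. -/
def Abar {m n : ℕ} (A : Mat 𝔽 m n) : Matrix (Fin m ⊕ Fin n) (Fin n ⊕ Fin m) (L 𝔽) :=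
  Matrix.fromBlocks A 1 1 0

/-- `Ā^* = [[Aᵀ, I_n], [I_m, 0]]`. Rows are indexed by `Fin n ⊕ Fin m`,
columns by `Fin m ⊕ Fin n`. -/
def AbarStar {m n : ℕ} (A : Mat 𝔽 m n) : Matrix (Fin n ⊕ Fin m) (Fin m ⊕ Fin n) (L 𝔽) :=
  Matrix.fromBlocks A.transpose 1 1 0

/-- The standard bilinear form `x·y = Σ_i x_i y_i` on `ℒ^ι`. -/
def dotL {ι : Type*} [Fintype ι] (x y : ι → L 𝔽) : L 𝔽 := ∑ i, x i * y i

/-- Strictly increasing `v`-tuples `1 ≤ i_1 < ⋯ < i_v ≤ m`. -/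
def IncTuple (v m : ℕ) : Type := {f : Fin v → Fin m // StrictMono f}

/-- The vector `M_v(A) ∈ ℒ^(C(m,v)²)` of the determinants
`det (y_{i_r} · C_{j_s}(Ā^*))_{1 ≤ r,s ≤ v}` over all strictly increasing index
tuples.  (For `v = 0` every coordinate is an empty determinant, i.e. `1`.) -/
def MvVec {m n : ℕ} (y : Fin m → (Fin n ⊕ Fin m → L 𝔽)) (v : ℕ) (A : Mat 𝔽 m n) :
    IncTuple v m × IncTuple v m → L 𝔽 := fun p =>
  Matrix.det (Matrix.of fun r s : Fin v =>
    dotL (y (p.1.1 r)) fun t => AbarStar A t (Sum.inl (p.2.1 s)))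

/-- `‖M_v(A)‖_∞`. -/
def MvNorm {m n : ℕ} (y : Fin m → (Fin n ⊕ Fin m → L 𝔽)) (v : ℕ) (A : Mat 𝔽 m n) : ℝ :=
  vnorm (MvVec y v A)

/-- `M_v(K) = max_{A ∈ K} ‖M_v(A)‖_∞` for `K ⊆ ℒ^(mn)`. -/
def MvSet {m n : ℕ} (y : Fin m → (Fin n ⊕ Fin m → L 𝔽)) (v : ℕ) (K : Set (Mat 𝔽 m n)) : ℝ :=
  sSup {r : ℝ | ∃ A ∈ K, r = MvNorm y v A}

/-- `D_v(A) = det (y_h · C_l(Ā^*))_{1 ≤ h,l ≤ v}`. -/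
def Dv {m n : ℕ} (y : Fin m → (Fin n ⊕ Fin m → L 𝔽)) (v : ℕ) (hv : v ≤ m)
    (A : Mat 𝔽 m n) : L 𝔽 :=
  Matrix.det (Matrix.of fun h l : Fin v =>
    dotL (y (Fin.castLE hv h)) fun t => AbarStar A t (Sum.inl (Fin.castLE hv l)))

/-- The discrete gradient `∇D_v(A) ∈ ℒ^(mn)`, with coordinates
`D_v(A + E_{ij}) - D_v(A)`. -/
def gradDv {m n : ℕ} (y : Fin m → (Fin n ⊕ Fin m → L 𝔽)) (v : ℕ) (hv : v ≤ m)
    (A : Mat 𝔽 m n) : Fin m × Fin n → L 𝔽 := fun p =>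
  Dv y v hv (A + Matrix.single p.1 p.2 1) - Dv y v hv A

/-- `y_1, …, y_m ∈ ℒ^(m+n)` form an orthonormal system: `y_h · y_{h'} = δ_{h h'}`
and `‖t_1 y_1 + ⋯ + t_m y_m‖_∞ = max_h ‖t_h‖`. -/
def OrthoSystem {m n : ℕ} (y : Fin m → (Fin n ⊕ Fin m → L 𝔽)) : Prop :=
  (∀ h h', dotL (y h) (y h') = if h = h' then 1 else 0) ∧
  (∀ t : Fin m → L 𝔽, vnorm (fun r => ∑ h, t h * y h r) = ⨆ h, lnorm (t h))

/-! ### Distance functions, parallelepipeds and successive minima -/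

/-- The `j`-th successive minimum of a distance function `F` on `ℒ^N`: the infimum
of all `λ > 0` such that `{F < λ}` contains `j` linearly independent points of
`𝔽[X]^N`. -/
def succMin {N : ℕ} (F : (Fin N → L 𝔽) → ℝ) (j : ℕ) : ℝ :=
  sInf {lam : ℝ | 0 < lam ∧ ∃ v : Fin j → (Fin N → L 𝔽),
    (∀ r, ∀ i, IsPoly (v r i)) ∧ LinearIndependent (L 𝔽) v ∧ ∀ r, F (v r) < lam}

/-- The distance function `F_A(x) = max_j c_j⁻¹ ‖Σ_i x_i a_{ij}‖`. -/
def FA {N : ℕ} (A : Matrix (Fin N) (Fin N) (L 𝔽)) (c : Fin N → ℝ)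
    (x : Fin N → L 𝔽) : ℝ :=
  ⨆ j, (c j)⁻¹ * lnorm (∑ i, x i * A i j)

/-- The parallelepiped `P_A(λ) = {x ∈ ℒ^N : F_A(x) < λ}`. -/
def PA {N : ℕ} (A : Matrix (Fin N) (Fin N) (L 𝔽)) (c : Fin N → ℝ) (lam : ℝ) :
    Set (Fin N → L 𝔽) := {x | FA A c x < lam}

/-- The polar distance function `F_A^*(y) = sup_{x ≠ 0} ‖x·y‖ / F_A(x)`. -/
def FAstar {N : ℕ} (A : Matrix (Fin N) (Fin N) (L 𝔽)) (c : Fin N → ℝ)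
    (y : Fin N → L 𝔽) : ℝ :=
  ⨆ x : {x : Fin N → L 𝔽 // x ≠ 0}, lnorm (dotL x.1 y) / FA A c x.1

/-! ### Haar measure, characterized by translation invariance and normalization -/

/-- The Borel σ-algebra on `ℒ^N`, generated by the balls. -/
def vecSigma (𝔽 : Type) [Field 𝔽] [Fintype 𝔽] (N : ℕ) : MeasurableSpace (Fin N → L 𝔽) :=
  MeasurableSpace.generateFrom {s | ∃ c ρ, (0 : ℝ) < ρ ∧ s = vball c ρ}

/-- `μ` is the Haar measure on `ℒ^N`: translation invariant and normalized so that
the unit ball `I^N` has measure `1` (these properties determine it uniquely). -/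
def IsHaarVec {N : ℕ} (μ : @Measure (Fin N → L 𝔽) (vecSigma 𝔽 N)) : Prop :=
  (∀ (v : Fin N → L 𝔽) (s : Set (Fin N → L 𝔽)), μ ((fun x => x + v) ⁻¹' s) = μ s) ∧
  μ {x | ∀ i, lnorm (x i) < 1} = 1

/-- The Borel σ-algebra on `ℒ^(mn)`, generated by the balls. -/
def matSigma (𝔽 : Type) [Field 𝔽] [Fintype 𝔽] (m n : ℕ) : MeasurableSpace (Mat 𝔽 m n) :=
  MeasurableSpace.generateFrom {s | ∃ c ρ, (0 : ℝ) < ρ ∧ s = mball c ρ}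

/-- `μ` is the Haar measure on `ℒ^(mn)`: translation invariant and normalized so
that the unit ball `I^(mn)` has measure `1`. -/
def IsHaarMat {m n : ℕ} (μ : @Measure (Mat 𝔽 m n) (matSigma 𝔽 m n)) : Prop :=
  (∀ (v : Mat 𝔽 m n) (s : Set (Mat 𝔽 m n)), μ ((fun x => x + v) ⁻¹' s) = μ s) ∧
  μ {A | ∀ i j, lnorm (A i j) < 1} = 1

/-! ### The constants of Section 3 -/

/-- `τ = m/(m+n)`. -/
def tau (m n : ℕ) : ℝ := m / (m + n)

/-- `δ = R^(-m(m+n)²)`. -/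
def del (R : ℝ) (m n : ℕ) : ℝ := R ^ (-((m : ℝ) * ((m : ℝ) + n) ^ 2))

/-- `δ* = R^(-n(m+n)²)`. -/
def delStar (R : ℝ) (m n : ℕ) : ℝ := R ^ (-((n : ℝ) * ((m : ℝ) + n) ^ 2))

lemma card_gt : (1 : ℝ) < (Fintype.card 𝔽 : ℝ) := by
  exact_mod_cast Fintype.one_lt_card (α := 𝔽)

lemma lnorm_zero : lnorm (0 : L 𝔽) = 0 := by simp [lnorm]

lemma lnorm_nonneg (x : L 𝔽) : 0 ≤ lnorm x := by
  unfold lnorm; split_ifs <;> positivity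

lemma lnorm_pos {x : L 𝔽} (hx : x ≠ 0) : 0 < lnorm x := by
  have := card_gt (𝔽 := 𝔽)
  rw [lnorm, if_neg hx]; positivity

lemma lnorm_mul (x y : L 𝔽) : lnorm (x * y) = lnorm x * lnorm y := by
  by_cases hx : x = 0
  · simp [hx, lnorm_zero]
  by_cases hy : y = 0
  · simp [hy, lnorm_zero]
  have := card_gt (𝔽 := 𝔽)
  rw [lnorm, lnorm, lnorm, if_neg hx, if_neg hy, if_neg (mul_ne_zero hx hy),
    HahnSeries.order_mul hx hy, neg_add, zpow_add₀ (by positivity)]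

lemma lnorm_one : lnorm (1 : L 𝔽) = 1 := by
  simp [lnorm]

lemma lnorm_neg (x : L 𝔽) : lnorm (-x) = lnorm x := by
  simp [lnorm, HahnSeries.order_neg]

lemma lnorm_add_le (x y : L 𝔽) : lnorm (x + y) ≤ max (lnorm x) (lnorm y) := by
  by_cases hx : x = 0
  · simp [hx]
  by_cases hy : y = 0
  · simp [hy]
  by_cases hxy : x + y = 0
  · rw [hxy, lnorm_zero]; exact le_max_of_le_left (lnorm_nonneg _)
  have h := HahnSeries.min_order_le_order_add hxy
  have hc := card_gt (𝔽 := 𝔽)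
  rw [lnorm, lnorm, lnorm, if_neg hx, if_neg hy, if_neg hxy]
  rcases min_le_iff.1 h with h | h
  · exact le_max_of_le_left (zpow_le_zpow_right₀ hc.le (by omega))
  · exact le_max_of_le_right (zpow_le_zpow_right₀ hc.le (by omega))

lemma lnorm_add_le' {x y : L 𝔽} {C : ℝ} (hx : lnorm x ≤ C) (hy : lnorm y ≤ C) :
    lnorm (x + y) ≤ C := (lnorm_add_le x y).trans (max_le hx hy)

lemma lnorm_sub_le' {x y : L 𝔽} {C : ℝ} (hx : lnorm x ≤ C) (hy : lnorm y ≤ C) :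
    lnorm (x - y) ≤ C := by
  rw [sub_eq_add_neg]; exact lnorm_add_le' hx (by rwa [lnorm_neg])

lemma lnorm_sum_le {ι : Type*} (s : Finset ι) (f : ι → L 𝔽) {C : ℝ} (hC : 0 ≤ C)
    (h : ∀ i ∈ s, lnorm (f i) ≤ C) : lnorm (∑ i ∈ s, f i) ≤ C := by
  induction s using Finset.induction_on with
  | empty => simpa [lnorm_zero] using hC
  | insert a s ha ih =>
    rw [Finset.sum_insert ha]
    exact lnorm_add_le' (h a (by simp)) (ih fun i hi => h i (by simp [hi]))

lemma lnorm_sign (k : ℕ) (x : L 𝔽) : lnorm ((-1) ^ k * x) = lnorm x := by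
  rcases neg_one_pow_eq_or (L 𝔽) k with h | h <;> simp [h, lnorm_neg]

lemma lnorm_discrete {x d : L 𝔽} (hd : d ≠ 0)
    (h : lnorm x < (Fintype.card 𝔽 : ℝ) * lnorm d) : lnorm x ≤ lnorm d := by
  by_cases hx : x = 0
  · rw [hx, lnorm_zero]; exact lnorm_nonneg _
  have hc := card_gt (𝔽 := 𝔽)
  rw [lnorm, lnorm, if_neg hx, if_neg hd] at *
  rw [← zpow_one_add₀ (by positivity), zpow_lt_zpow_iff_right₀ hc] at h
  exact zpow_le_zpow_right₀ hc.le (by omega)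

lemma exists_lnorm {r : ℝ} (hr : 0 < r) :
    ∃ t : L 𝔽, lnorm t ≤ r ∧ r < (Fintype.card 𝔽 : ℝ) * lnorm t := by
  have hc := card_gt (𝔽 := 𝔽)
  obtain ⟨k, hk1, hk2⟩ := exists_mem_Ico_zpow hr hc
  refine ⟨HahnSeries.single (-k) 1, ?_, ?_⟩
  · rw [lnorm, if_neg (by simp), HahnSeries.order_single one_ne_zero, neg_neg]; exact hk1
  · rw [lnorm, if_neg (by simp), HahnSeries.order_single one_ne_zero, neg_neg,
      ← zpow_one_add₀ (by positivity), add_comm]; exact hk2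

lemma le_vnorm {ι : Type*} [Finite ι] (x : ι → L 𝔽) (i : ι) : lnorm (x i) ≤ vnorm x :=
  le_ciSup (f := fun i => lnorm (x i)) (Set.finite_range _).bddAbove i

lemma vnorm_le {ι : Type*} (x : ι → L 𝔽) {C : ℝ} (hC : 0 ≤ C) (h : ∀ i, lnorm (x i) ≤ C) :
    vnorm x ≤ C := Real.iSup_le h hC

lemma vnorm_nonneg {ι : Type*} (x : ι → L 𝔽) : 0 ≤ vnorm x :=
  Real.iSup_nonneg fun _ => lnorm_nonneg _

lemma le_mnorm {m n : ℕ} (A : Mat 𝔽 m n) (i : Fin m) (j : Fin n) : lnorm (A i j) ≤ mnorm A :=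
  le_ciSup (f := fun p : Fin m × Fin n => lnorm (A p.1 p.2)) (Set.finite_range _).bddAbove (i, j)

lemma mnorm_le {m n : ℕ} (A : Mat 𝔽 m n) {C : ℝ} (hC : 0 ≤ C) (h : ∀ i j, lnorm (A i j) ≤ C) :
    mnorm A ≤ C := Real.iSup_le (fun p => h p.1 p.2) hC

lemma mnorm_nonneg {m n : ℕ} (A : Mat 𝔽 m n) : 0 ≤ mnorm A :=
  Real.iSup_nonneg fun _ => lnorm_nonneg _

instance incFinite (v m : ℕ) : Finite (IncTuple v m) := Subtype.finite

lemma lnorm_det_le {u : ℕ} (P : Matrix (Fin u) (Fin u) (L 𝔽)) {C : ℝ} (hC : 0 ≤ C)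
    (h : ∀ i j, lnorm (P i j) ≤ C) : lnorm P.det ≤ C ^ u := by
  induction u with
  | zero => simp [lnorm_one]
  | succ u ih =>
    rw [Matrix.det_succ_column P 0]
    refine lnorm_sum_le _ _ (by positivity) fun i _ => ?_
    rw [mul_assoc, lnorm_sign, lnorm_mul, pow_succ']
    exact mul_le_mul (h _ _) (ih _ fun _ _ => h _ _) (lnorm_nonneg _) hC

lemma ortho_le {m n : ℕ} {y : Fin m → (Fin n ⊕ Fin m → L 𝔽)} (hy : OrthoSystem y)
    (h : Fin m) (r : Fin n ⊕ Fin m) : lnorm (y h r) ≤ 1 := by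
  have h2 := hy.2 (Pi.single h 1)
  have e : (fun r => ∑ h', (Pi.single h 1 : Fin m → L 𝔽) h' * y h' r) = y h := by
    ext1 r
    rw [Finset.sum_eq_single h]
    · simp
    · intro b _ hb; simp [hb]
    · simp
  rw [e] at h2
  refine (le_vnorm _ r).trans (h2.le.trans (Real.iSup_le (fun k => ?_) zero_le_one))
  by_cases hk : k = h
  · subst hk; simp [lnorm_one]
  · simp [hk, lnorm_zero]

lemma dot_eq {m n : ℕ} (x : Fin n ⊕ Fin m → L 𝔽) (A : Mat 𝔽 m n) (l : Fin m) :
    dotL x (fun t => AbarStar A t (Sum.inl l)) = ∑ j, x (Sum.inl j) * A l j + x (Sum.inr l) := by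
  simp [dotL, AbarStar, Fintype.sum_sum_type, Matrix.one_apply]

lemma MvNorm_bdd {m n : ℕ} {y : Fin m → (Fin n ⊕ Fin m → L 𝔽)} (hy : OrthoSystem y) (u : ℕ)
    {K : Set (Mat 𝔽 m n)} {σ : ℝ} (hK : ∀ A ∈ K, mnorm A ≤ σ) :
    BddAbove {r : ℝ | ∃ A ∈ K, r = MvNorm y u A} := by
  refine ⟨(max σ 1) ^ u, ?_⟩
  rintro _ ⟨A, hA, rfl⟩
  have h1 : (0 : ℝ) ≤ max σ 1 := le_max_of_le_right zero_le_one
  refine vnorm_le _ (by positivity) fun p => lnorm_det_le _ h1 fun r s => ?_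
  simp only [Matrix.of_apply]
  rw [dot_eq]
  refine lnorm_add_le' (lnorm_sum_le _ _ h1 fun j _ => ?_)
    ((ortho_le hy _ _).trans (le_max_right _ _))
  rw [lnorm_mul]
  calc _ ≤ 1 * σ := mul_le_mul (ortho_le hy _ _) ((le_mnorm A _ _).trans (hK A hA))
          (lnorm_nonneg _) zero_le_one
    _ ≤ _ := by rw [one_mul]; exact le_max_left _ _

lemma minor_le {m n : ℕ} {y : Fin m → (Fin n ⊕ Fin m → L 𝔽)} (u : ℕ)
    {K : Set (Mat 𝔽 m n)} (hb : BddAbove {r : ℝ | ∃ A ∈ K, r = MvNorm y u A})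
    {A : Mat 𝔽 m n} (hA : A ∈ K) (p : IncTuple u m × IncTuple u m) :
    lnorm (MvVec y u A p) ≤ MvSet y u K :=
  (le_vnorm (MvVec y u A) p).trans (le_csSup hb ⟨A, hA, rfl⟩)

lemma step {m n : ℕ} {y : Fin m → (Fin n ⊕ Fin m → L 𝔽)} (hy : OrthoSystem y) (u : ℕ)
    {K : Set (Mat 𝔽 m n)} (hb : BddAbove {r : ℝ | ∃ A ∈ K, r = MvNorm y u A})
    {A B : Mat 𝔽 m n} (hB : B ∈ K) (k : Fin m) (hAB : ∀ i, i ≠ k → A i = B i) {ρ : ℝ}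
    (hρ : 0 ≤ ρ) (hd : ∀ j, lnorm (A k j - B k j) ≤ ρ)
    (p : IncTuple (u + 1) m × IncTuple (u + 1) m) :
    lnorm (MvVec y (u + 1) A p - MvVec y (u + 1) B p) ≤ ρ * MvSet y u K := by
  have hM : 0 ≤ MvSet y u K := by
    refine (vnorm_nonneg _).trans (le_csSup hb ⟨B, hB, rfl⟩)
  by_cases hk : ∃ s, p.2.1 s = k
  · obtain ⟨s, hs⟩ := hk
    unfold MvVec
    rw [Matrix.det_succ_column _ s, Matrix.det_succ_column _ s, ← Finset.sum_sub_distrib]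
    refine lnorm_sum_le _ _ (by positivity) fun i _ => ?_
    have hsub : ∀ (A : Mat 𝔽 m n), (Matrix.of fun r s => dotL (y (p.1.1 r)) fun t =>
        AbarStar A t (Sum.inl (p.2.1 s))).submatrix i.succAbove s.succAbove =
        Matrix.of fun r s' => dotL (y (p.1.1 (i.succAbove r))) fun t =>
          AbarStar A t (Sum.inl (p.2.1 (s.succAbove s'))) := fun A => rfl
    have hAB' : (Matrix.of fun r s' => dotL (y (p.1.1 (i.succAbove r))) fun t =>
          AbarStar A t (Sum.inl (p.2.1 (s.succAbove s')))) =
        (Matrix.of fun r s' => dotL (y (p.1.1 (i.succAbove r))) fun t =>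
          AbarStar B t (Sum.inl (p.2.1 (s.succAbove s')))) := by
      ext1 r s'
      simp only [Matrix.of_apply]
      rw [dot_eq, dot_eq, hAB]
      rw [← hs]
      exact fun h => Fin.succAbove_ne s s' (p.2.2.injective h)
    rw [hsub, hsub, hAB', ← sub_mul, ← mul_sub, mul_assoc, lnorm_sign, lnorm_mul]
    refine mul_le_mul ?_ ?_ (lnorm_nonneg _) hρ
    · simp only [Matrix.of_apply]
      rw [dot_eq, dot_eq, hs, add_sub_add_right_eq_sub, ← Finset.sum_sub_distrib]
      refine lnorm_sum_le _ _ hρ fun j _ => ?_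
      rw [← mul_sub, lnorm_mul, ← one_mul ρ]
      exact mul_le_mul (ortho_le hy _ _) (hd j) (lnorm_nonneg _) zero_le_one
    · exact minor_le u hb hB (⟨fun r => p.1.1 (i.succAbove r),
        p.1.2.comp (Fin.strictMono_succAbove i)⟩, ⟨fun r => p.2.1 (s.succAbove r),
        p.2.2.comp (Fin.strictMono_succAbove s)⟩)
  · have : MvVec y (u + 1) A p = MvVec y (u + 1) B p := by
      unfold MvVec
      congr 1
      ext1 r s
      simp only [Matrix.of_apply]
      rw [dot_eq, dot_eq, hAB]
      exact fun h => hk ⟨s, h⟩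
    rw [this, sub_self, lnorm_zero]; positivity

lemma change {m n : ℕ} {y : Fin m → (Fin n ⊕ Fin m → L 𝔽)} (hy : OrthoSystem y) (u : ℕ)
    {c : Mat 𝔽 m n} {R : ℝ}
    (hb : BddAbove {r : ℝ | ∃ A ∈ mball c R, r = MvNorm y u A})
    {A B : Mat 𝔽 m n} (hA : A ∈ mball c R) (hB : B ∈ mball c R) {ρ : ℝ}
    (hρ : 0 ≤ ρ) (hd : ∀ i j, lnorm (A i j - B i j) ≤ ρ)
    (p : IncTuple (u + 1) m × IncTuple (u + 1) m) :
    lnorm (MvVec y (u + 1) A p - MvVec y (u + 1) B p) ≤ ρ * MvSet y u (mball c R) := by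
  have hM : 0 ≤ MvSet y u (mball c R) := by
    refine (vnorm_nonneg _).trans (le_csSup hb ⟨B, hB, rfl⟩)
  have key : ∀ S : Finset (Fin m), lnorm (MvVec y (u + 1) (Matrix.of fun i j => if i ∈ S then A i j else B i j) p
      - MvVec y (u + 1) B p) ≤ ρ * MvSet y u (mball c R) := by
    intro S
    induction S using Finset.induction_on with
    | empty =>
      have e : (Matrix.of fun i j => if i ∈ (∅ : Finset (Fin m)) then A i j else B i j) = B := by
        ext1 i j; simp
      rw [e, sub_self, lnorm_zero]; positivity
    | insert a S ha ih =>
      rw [← sub_add_sub_cancel]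
      refine lnorm_add_le' ?_ ih
      refine step hy u hb ?_ a ?_ hρ ?_ p
      · refine mnorm_le _ ((mnorm_nonneg _).trans hB) fun i j => ?_
        simp only [Matrix.sub_apply, Matrix.of_apply]
        split_ifs
        · exact (le_mnorm (A - c) i j).trans hA
        · exact (le_mnorm (B - c) i j).trans hB
      · intro i hi
        ext1 j
        simp [hi]
      · intro j
        simpa [ha] using hd a j
  have e : (Matrix.of fun i j => if i ∈ (Finset.univ : Finset (Fin m)) then A i j else B i j)
      = A := by
    ext1 i j; simp
  have := key Finset.univ
  rwa [e] at this


/-- minors along the last column -/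
def mnr {m n : ℕ} (y : Fin m → (Fin n ⊕ Fin m → L 𝔽)) (w : ℕ) (hv : w + 1 ≤ m)
    (A : Mat 𝔽 m n) (h : Fin (w + 1)) : L 𝔽 :=
  Matrix.det (Matrix.of fun r s : Fin w => dotL (y (Fin.castLE hv (h.succAbove r)))
    fun t => AbarStar A t (Sum.inl (Fin.castLE hv s.castSucc)))

/-- coefficients -/
def cf {m n : ℕ} (y : Fin m → (Fin n ⊕ Fin m → L 𝔽)) (w : ℕ) (hv : w + 1 ≤ m)
    (A : Mat 𝔽 m n) (h : Fin m) : L 𝔽 :=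
  if hh : h.1 < w + 1 then (-1) ^ (h.1 + w) * mnr y w hv A ⟨h.1, hh⟩ else 0

lemma cf_cast {m n : ℕ} (y : Fin m → (Fin n ⊕ Fin m → L 𝔽)) (w : ℕ) (hv : w + 1 ≤ m)
    (A : Mat 𝔽 m n) (h : Fin (w + 1)) :
    cf y w hv A (Fin.castLE hv h) = (-1) ^ (h.1 + w) * mnr y w hv A h := by
  have := h.2
  unfold cf
  rw [dif_pos (show (Fin.castLE hv h).1 < w + 1 from h.2)]
  rfl

lemma cf_sum {m n : ℕ} (y : Fin m → (Fin n ⊕ Fin m → L 𝔽)) (w : ℕ) (hv : w + 1 ≤ m)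
    (A : Mat 𝔽 m n) (f : Fin m → L 𝔽) :
    ∑ h, cf y w hv A h * f h =
      ∑ h : Fin (w + 1), (-1) ^ (h.1 + w) * f (Fin.castLE hv h) * mnr y w hv A h := by
  symm
  refine Fintype.sum_of_injective (Fin.castLE hv) (Fin.castLE_injective hv) _ _ ?_ ?_
  · intro i hi
    have : ¬ i.1 < w + 1 := fun h => hi ⟨⟨i.1, h⟩, rfl⟩
    simp [cf, this]
  · intro i
    rw [cf_cast]; ring

lemma det_expand {m n : ℕ} (y : Fin m → (Fin n ⊕ Fin m → L 𝔽)) (w : ℕ) (hv : w + 1 ≤ m)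
    (A B : Mat 𝔽 m n) (g : Fin (w + 1) → Fin m) (hg : ∀ s : Fin w, g s.castSucc =
      Fin.castLE hv s.castSucc) (hAB : ∀ s : Fin w, B (Fin.castLE hv s.castSucc) =
      A (Fin.castLE hv s.castSucc)) :
    Matrix.det (Matrix.of fun h l : Fin (w + 1) =>
      dotL (y (Fin.castLE hv h)) fun t => AbarStar B t (Sum.inl (g l))) =
    ∑ h, cf y w hv A h * dotL (y h) (fun t => AbarStar B t (Sum.inl (g (Fin.last w)))) := by
  rw [cf_sum, Matrix.det_succ_column _ (Fin.last w)]
  refine Finset.sum_congr rfl fun h _ => ?_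
  congr 1
  unfold mnr
  congr 1
  ext1 r s
  simp only [Matrix.submatrix_apply, Matrix.of_apply, Fin.succAbove_last]
  rw [dot_eq, dot_eq, hg, hAB]

lemma grad_eq {m n : ℕ} (y : Fin m → (Fin n ⊕ Fin m → L 𝔽)) (w : ℕ) (hv : w + 1 ≤ m)
    (A : Mat 𝔽 m n) (j : Fin n) :
    gradDv y (w + 1) hv A (Fin.castLE hv (Fin.last w), j) =
      ∑ h, cf y w hv A h * y h (Sum.inl j) := by
  unfold gradDv Dv
  rw [det_expand y w hv A _ (Fin.castLE hv) (fun _ => rfl), det_expand y w hv A A (Fin.castLE hv)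
    (fun _ => rfl) (fun _ => rfl), ← Finset.sum_sub_distrib]
  · refine Finset.sum_congr rfl fun h _ => ?_
    rw [← mul_sub, dot_eq, dot_eq, add_sub_add_right_eq_sub, ← Finset.sum_sub_distrib,
      Finset.sum_eq_single j]
    · simp only [Matrix.add_apply, Matrix.single_apply_same]
      ring
    · intro b _ hb
      simp [Matrix.single_apply, hb.symm]
    · simp
  · intro s
    ext1 b
    have : Fin.castLE hv (Fin.last w) ≠ Fin.castLE hv s.castSucc := fun h => by
      have := congrArg Fin.val h
      simp at this
      omega
    rw [Matrix.add_apply, Matrix.single_apply, if_neg (fun h => this h.1), add_zero]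

lemma col_le {m n : ℕ} (y : Fin m → (Fin n ⊕ Fin m → L 𝔽)) (w : ℕ) (hv : w + 1 ≤ m)
    (A : Mat 𝔽 m n) (l : Fin m) :
    lnorm (∑ h, cf y w hv A h * dotL (y h) (fun t => AbarStar A t (Sum.inl l))) ≤
      MvNorm y (w + 1) A := by
  let g : Fin (w + 1) → Fin m := Fin.snoc (fun s : Fin w => Fin.castLE hv s.castSucc) l
  have hg : ∀ s : Fin w, g s.castSucc = Fin.castLE hv s.castSucc := fun s => by
    simp only [g, Fin.snoc_castSucc]
  have hl : g (Fin.last w) = l := by simp only [g, Fin.snoc_last]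
  have e := det_expand y w hv A A g hg (fun _ => rfl)
  rw [hl] at e
  rw [← e]
  by_cases hlw : l.1 < w
  · rw [Matrix.det_zero_of_column_eq (i := Fin.last w) (j := Fin.castSucc ⟨l.1, hlw⟩), lnorm_zero]
    · exact vnorm_nonneg _
    · intro h
      have := congrArg Fin.val h
      simp at this
      omega
    · intro k
      simp only [Matrix.of_apply]
      rw [hl, hg]
      rfl
  · have hmono : StrictMono g := by
      intro a b hab
      induction b using Fin.lastCases with
      | last =>
        induction a using Fin.lastCases with
        | last => exact absurd hab (lt_irrefl _)
        | cast a =>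
          rw [hl, hg]
          have := a.2
          rw [Fin.lt_def]
          simp
          omega
      | cast b =>
        induction a using Fin.lastCases with
        | last =>
          have := b.2
          rw [Fin.lt_def] at hab
          simp at hab
          omega
        | cast a =>
          rw [hg, hg]
          exact hab
    exact le_vnorm (MvVec y (w + 1) A) (⟨Fin.castLE hv, fun _ _ h => h⟩, ⟨g, hmono⟩)

lemma grad_lower {m n : ℕ} {y : Fin m → (Fin n ⊕ Fin m → L 𝔽)} (hy : OrthoSystem y)
    (w : ℕ) (hv : w + 1 ≤ m) (A : Mat 𝔽 m n) {σ : ℝ} (hA : mnorm A ≤ σ) :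
    lnorm (mnr y w hv A (Fin.last w)) ≤
      max (max 1 σ * vnorm (gradDv y (w + 1) hv A)) (MvNorm y (w + 1) A) := by
  set G := vnorm (gradDv y (w + 1) hv A) with hG
  have hG0 : 0 ≤ G := vnorm_nonneg _
  have hs1 : 1 * G ≤ max 1 σ * G := mul_le_mul_of_nonneg_right (le_max_left _ _) hG0
  have hs2 : σ * G ≤ max 1 σ * G := mul_le_mul_of_nonneg_right (le_max_right _ _) hG0
  have h0 : 0 ≤ max (max 1 σ * G) (MvNorm y (w + 1) A) := le_max_of_le_right (vnorm_nonneg _)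
  have h2 := hy.2 (cf y w hv A)
  have h3 : lnorm (mnr y w hv A (Fin.last w)) ≤ ⨆ h, lnorm (cf y w hv A h) := by
    have := le_vnorm (cf y w hv A) (Fin.castLE hv (Fin.last w))
    rwa [cf_cast, lnorm_sign] at this
  refine h3.trans (h2 ▸ ?_)
  have hin : ∀ j, lnorm (∑ h, cf y w hv A h * y h (Sum.inl j)) ≤ G := fun j => by
    rw [← grad_eq]; exact le_vnorm _ _
  refine vnorm_le _ h0 ?_
  rintro (j | l)
  · exact (hin j).trans (le_max_of_le_left (by linarith))
  · have e : ∑ h, cf y w hv A h * y h (Sum.inr l) =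
        ∑ h, cf y w hv A h * dotL (y h) (fun t => AbarStar A t (Sum.inl l)) -
          ∑ j, (∑ h, cf y w hv A h * y h (Sum.inl j)) * A l j := by
      simp only [dot_eq, mul_add, Finset.sum_add_distrib, Finset.mul_sum, Finset.sum_mul]
      rw [Finset.sum_comm (s := (Finset.univ : Finset (Fin n)))]
      simp only [mul_assoc]
      ring
    simp only [e]
    refine lnorm_sub_le' ((col_le y w hv A l).trans (le_max_right _ _)) ?_
    refine lnorm_sum_le _ _ h0 fun j _ => ?_
    rw [lnorm_mul]
    refine le_max_of_le_left (le_trans ?_ hs2)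
    rw [mul_comm]
    exact mul_le_mul ((le_mnorm A l j).trans hA) (hin j) (lnorm_nonneg _)
      ((mnorm_nonneg A).trans hA)

lemma radius {m n : ℕ} (hm : 0 < m) (hn : 0 < n) {c c₀ : Mat 𝔽 m n} {r r₀ : ℝ} (hr : 0 < r)
    (h : mball c r ⊆ mball c₀ r₀) : r < (Fintype.card 𝔽 : ℝ) * r₀ := by
  obtain ⟨t, ht1, ht2⟩ := exists_lnorm (𝔽 := 𝔽) hr
  have hc := card_gt (𝔽 := 𝔽)
  refine ht2.trans_le (mul_le_mul_of_nonneg_left ?_ (by linarith))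
  have m1 : c ∈ mball c₀ r₀ := h (mnorm_le _ hr.le fun i j => by simp [lnorm_zero, hr.le])
  have m2 : c + Matrix.of (fun _ _ => t) ∈ mball c₀ r₀ :=
    h (mnorm_le _ hr.le fun i j => by simpa using ht1)
  have e1 := (le_mnorm (c - c₀) ⟨0, hm⟩ ⟨0, hn⟩).trans m1
  have e2 := (le_mnorm (c + Matrix.of (fun _ _ => t) - c₀) ⟨0, hm⟩ ⟨0, hn⟩).trans m2
  have := lnorm_sub_le' e2 e1
  simpa using this


/-- **Theorem (Statement 10).** (Lemma `gradpositiv`.)  Under the stated conditions,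
if `‖M_v(A')‖_∞ < (1/8) M_{v-1}(B')` and the maximum `‖M_{v-1}(A')‖_∞` is attained at
the coordinate `d_v` (the leading `(v-1) × (v-1)` minor), then
`‖∇D_v(A')‖_∞ > K₅(σ) M_{v-1}(B')`. -/
theorem grad_positive (𝔽 : Type) [Field 𝔽] [Fintype 𝔽] (m n : ℕ)
    (hm : 0 < m) (hn : 0 < n) (σ : ℝ) (hσ : 0 < σ) :
    ∃ K₅ : ℝ, 0 < K₅ ∧
      ∀ (y : Fin m → (Fin n ⊕ Fin m → L 𝔽)), OrthoSystem y →
      ∀ (v : ℕ) (_ : 1 ≤ v) (hv : v ≤ m),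
      ∀ (c₀ : Mat 𝔽 m n) (ρ₀ : ℝ), 0 < ρ₀ → ρ₀ < 1 →
        (∀ A ∈ mball c₀ ρ₀, mnorm A ≤ σ) →
      ∀ (μprev : ℝ), 0 < μprev →
      ∀ (c'' : Mat 𝔽 m n) (ρ'' : ℝ), mball c'' ρ'' ⊆ mball c₀ ρ₀ →
        (∀ A ∈ mball c'' ρ'',
          ρ₀ * μprev * MvSet y (v - 2) (mball c'' ρ'') < MvNorm y (v - 1) A) →
      ∀ (c' : Mat 𝔽 m n) (ρ' : ℝ), ρ' < (1 / 2) * μprev * ρ'' →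
        mball c' ρ' ⊆ mball c'' ρ'' →
      ∀ A' ∈ mball c' ρ',
        MvNorm y v A' < (1 / 8) * MvSet y (v - 1) (mball c' ρ') →
        MvNorm y (v - 1) A' = lnorm (MvVec y (v - 1) A'
          (⟨Fin.castLE ((Nat.sub_le v 1).trans hv), fun _ _ hab => hab⟩,
           ⟨Fin.castLE ((Nat.sub_le v 1).trans hv), fun _ _ hab => hab⟩)) →
        K₅ * MvSet y (v - 1) (mball c' ρ') < vnorm (gradDv y v hv A') := by
  refine ⟨1 / (2 * max 1 σ), by positivity, ?_⟩
  intro y hy v hv1 hv c₀ ρ₀ hρ₀ _ hσB μ hμ c'' ρ'' hB'' hM c' ρ' hρ' hB' A' hA' hlt hmax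
  obtain ⟨w, rfl⟩ : ∃ w, v = w + 1 := ⟨v - 1, by omega⟩
  have hmax' : MvNorm y w A' = lnorm (mnr y w hv A' (Fin.last w)) := by
    refine hmax.trans ?_
    unfold mnr
    simp only [Fin.succAbove_last]
    rfl
  change ∀ A ∈ mball c'' ρ'', ρ₀ * μ * MvSet y (w - 1) (mball c'' ρ'') < MvNorm y w A at hM
  change MvNorm y (w + 1) A' < 1 / 8 * MvSet y w (mball c' ρ') at hlt
  change 1 / (2 * max 1 σ) * MvSet y w (mball c' ρ') < _
  have hc := card_gt (𝔽 := 𝔽)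
  set N := MvNorm y w A' with hN
  have hρ'0 : 0 ≤ ρ' := (mnorm_nonneg _).trans hA'
  have hρ''0 : 0 < ρ'' := by
    by_contra hneg
    push Not at hneg
    nlinarith
  have hrad := radius hm hn hρ''0 hB''
  have hσ' : ∀ A ∈ mball c'' ρ'', mnorm A ≤ σ := fun A hA => hσB A (hB'' hA)
  have hbd := fun u => MvNorm_bdd hy u hσ'
  have hM0 : 0 ≤ MvSet y (w - 1) (mball c'' ρ'') :=
    (vnorm_nonneg _).trans (le_csSup (hbd _) ⟨A', hB' hA', rfl⟩)
  have hN0 : 0 < N := lt_of_le_of_lt (by positivity) (hM A' (hB' hA'))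
  have hd : mnr y w hv A' (Fin.last w) ≠ 0 := by
    intro h
    rw [h, lnorm_zero] at hmax'
    exact hN0.ne' hmax'
  have hsup : MvSet y w (mball c' ρ') ≤ N := by
    refine csSup_le ⟨_, A', hA', rfl⟩ ?_
    rintro _ ⟨A, hA, rfl⟩
    refine vnorm_le _ hN0.le fun p => ?_
    rcases w with _ | u
    · have : MvVec y 0 A p = MvVec y 0 A' p := by simp [MvVec]
      rw [this]
      exact le_vnorm _ p
    · rw [← sub_add_cancel (MvVec y (u + 1) A p) (MvVec y (u + 1) A' p)]
      refine lnorm_add_le' ?_ (le_vnorm _ p)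
      rw [hmax']
      refine lnorm_discrete hd ?_
      rw [← hmax']
      have hch := change hy u (hbd u) (hB' hA) (hB' hA') hρ'0 (fun i j => by
        have := lnorm_sub_le' ((le_mnorm (A - c') i j).trans hA)
          ((le_mnorm (A' - c') i j).trans hA')
        simpa using this) p
      have hM1 := hM A' (hB' hA')
      simp only [Nat.add_sub_cancel] at hM1 hM0
      set Q := MvSet y u (mball c'' ρ'')
      have h1 : ρ' ≤ (Fintype.card 𝔽 : ℝ) * (ρ₀ * μ) := by
        nlinarith [mul_pos hμ hρ''0, mul_lt_mul_of_pos_left hrad hμ]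
      calc _ ≤ ρ' * Q := hch
        _ ≤ (Fintype.card 𝔽 : ℝ) * (ρ₀ * μ) * Q := mul_le_mul_of_nonneg_right h1 hM0
        _ = (Fintype.card 𝔽 : ℝ) * (ρ₀ * μ * Q) := by ring
        _ < _ := mul_lt_mul_of_pos_left hM1 (by linarith)
  have hgl := grad_lower hy w hv A' (hσ' A' (hB' hA'))
  rw [← hmax'] at hgl
  have hs : 0 < max 1 σ := by positivity
  have hfin : N ≤ max 1 σ * vnorm (gradDv y (w + 1) hv A') := by
    rcases le_max_iff.1 hgl with h | h
    · exact h
    · exfalso; linarith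
  rw [div_mul_eq_mul_div, one_mul, div_lt_iff₀ (by positivity)]
  nlinarith


end FSBad
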